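/- Let M, K ≥ 1, s > 0, H ∈ ℂ^{M×M} invertible, C ∈ ℂ^{M×K}, and b ∈ ℂ^M. Choosing the exact integer-forcing scaling α = (H^{-1})^H·b (equivalently α^H = b^H·H^{-1}), the non-integer self-interference term vanishes: C^H·(H^H·α − b) = 0, and the effective-noise variance equals ‖(H^{-1})^H·b‖². Consequently σ²(HC, b) = b^H·C·(s^{-1}·I_K + C^H·H^H·H·C)^{-1}·C^H·b ≤ ‖(H^{-1})^H·b‖² for every s > 0. -/

import Mathlib

open Matrix
open scoped ComplexOrder

/-- Squared Hermitian (Euclidean) norm of a complex vector. -/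
noncomputable def hnormSq {n : ℕ} (x : Fin n → ℂ) : ℝ := ∑ i, Complex.normSq (x i)

theorem hnormSq_eq_re {n : ℕ} (x : Fin n → ℂ) : hnormSq x = (star x ⬝ᵥ x).re := by
  simp [hnormSq, dotProduct, Complex.normSq_apply]

theorem hnormSq_nonneg' {n : ℕ} (x : Fin n → ℂ) : 0 ≤ hnormSq x :=
  Finset.sum_nonneg fun i _ => Complex.normSq_nonneg _

theorem key_bound {m k : ℕ} (s : ℝ) (hs : 0 < s) (G : Matrix (Fin m) (Fin k) ℂ)
    (a : Fin m → ℂ) (y : Fin k → ℂ)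
    (h : ((s⁻¹ : ℂ) • (1 : Matrix (Fin k) (Fin k) ℂ) + Gᴴ * G) *ᵥ y = Gᴴ *ᵥ a) :
    (star a ⬝ᵥ (G *ᵥ y)).re ≤ hnormSq a := by
  have h1 : star (G *ᵥ y) ⬝ᵥ a = ((s⁻¹ : ℝ) : ℂ) * (star y ⬝ᵥ y) + star (G *ᵥ y) ⬝ᵥ (G *ᵥ y) := by
    rw [star_mulVec, ← dotProduct_mulVec, ← dotProduct_mulVec, ← h, add_mulVec, smul_mulVec,
      one_mulVec, dotProduct_add, dotProduct_smul, mulVec_mulVec]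
    simp
  have h2 : (star (G *ᵥ y) ⬝ᵥ a).re = s⁻¹ * hnormSq y + hnormSq (G *ᵥ y) := by
    rw [h1, Complex.add_re, Complex.re_ofReal_mul, ← hnormSq_eq_re, ← hnormSq_eq_re]
  have h3 : (star a ⬝ᵥ (G *ᵥ y)).re = (star (G *ᵥ y) ⬝ᵥ a).re := by
    simp only [dotProduct, Complex.re_sum, Pi.star_apply, RCLike.star_def, Complex.mul_re,
      Complex.conj_re, Complex.conj_im]
    exact Finset.sum_congr rfl fun i _ => by ring
  have h4 := hnormSq_nonneg' (a - G *ᵥ y)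
  rw [hnormSq_eq_re, star_sub, sub_dotProduct, dotProduct_sub, dotProduct_sub] at h4
  simp only [Complex.sub_re] at h4
  rw [← hnormSq_eq_re, ← hnormSq_eq_re] at h4
  have h5 : 0 ≤ s⁻¹ * hnormSq y := mul_nonneg (inv_nonneg.2 hs.le) (hnormSq_nonneg' y)
  linarith

/-- Exact integer forcing: with `α = (H⁻¹)ᴴ·b` the non-integer self-interference
vanishes, the effective-noise variance equals `‖(H⁻¹)ᴴ·b‖²`, and consequently
`σ²(HC, b) = bᴴ·C·(s⁻¹·I_K + Cᴴ·Hᴴ·H·C)⁻¹·Cᴴ·b ≤ ‖(H⁻¹)ᴴ·b‖²` for every `s > 0`. -/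
theorem stmt_13 (M K : ℕ) (hM : 1 ≤ M) (hK : 1 ≤ K) (s : ℝ) (hs : 0 < s)
    (H : Matrix (Fin M) (Fin M) ℂ) (hH : IsUnit H)
    (C : Matrix (Fin M) (Fin K) ℂ) (b : Fin M → ℂ) :
    Cᴴ *ᵥ (Hᴴ *ᵥ ((H⁻¹)ᴴ *ᵥ b) - b) = 0 ∧
    s * hnormSq (Cᴴ *ᵥ (Hᴴ *ᵥ ((H⁻¹)ᴴ *ᵥ b) - b)) + hnormSq ((H⁻¹)ᴴ *ᵥ b) =
      hnormSq ((H⁻¹)ᴴ *ᵥ b) ∧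
    ((star b) ᵥ* (C * ((s⁻¹ : ℂ) • 1 + Cᴴ * Hᴴ * H * C)⁻¹ * Cᴴ) ⬝ᵥ b).re ≤
      hnormSq ((H⁻¹)ᴴ *ᵥ b) := by
  have hd : IsUnit H.det := (Matrix.isUnit_iff_isUnit_det H).1 hH
  have hb : Hᴴ *ᵥ ((H⁻¹)ᴴ *ᵥ b) = b := by
    rw [mulVec_mulVec, ← conjTranspose_mul, nonsing_inv_mul _ hd, conjTranspose_one, one_mulVec]
  have h0 : Cᴴ *ᵥ (Hᴴ *ᵥ ((H⁻¹)ᴴ *ᵥ b) - b) = 0 := by rw [hb, sub_self, mulVec_zero]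
  refine ⟨h0, by rw [h0]; simp [hnormSq], ?_⟩
  have hQe : (s⁻¹ : ℂ) • (1 : Matrix (Fin K) (Fin K) ℂ) + Cᴴ * Hᴴ * H * C =
      (s⁻¹ : ℂ) • (1 : Matrix (Fin K) (Fin K) ℂ) + (H * C)ᴴ * (H * C) := by
    rw [conjTranspose_mul]; simp only [Matrix.mul_assoc]
  rw [hQe]
  have hs' : (0 : ℂ) < (s⁻¹ : ℂ) := by
    rw [← Complex.ofReal_inv]; exact_mod_cast inv_pos.2 hs
  have hQ : ((s⁻¹ : ℂ) • (1 : Matrix (Fin K) (Fin K) ℂ) + (H * C)ᴴ * (H * C)).PosDef :=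
    (PosDef.one.smul hs').add_posSemidef (posSemidef_conjTranspose_mul_self _)
  have hQd := (Matrix.isUnit_iff_isUnit_det _).1 hQ.isUnit
  set Q := (s⁻¹ : ℂ) • (1 : Matrix (Fin K) (Fin K) ℂ) + (H * C)ᴴ * (H * C) with hQdef
  set a := (H⁻¹)ᴴ *ᵥ b with ha
  have hk := key_bound s hs (H * C) a (Q⁻¹ *ᵥ ((H * C)ᴴ *ᵥ a)) (by
    rw [← hQdef, mulVec_mulVec, mul_nonsing_inv _ hQd, one_mulVec])
  have e : (star b) ᵥ* (C * Q⁻¹ * Cᴴ) ⬝ᵥ b =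
      star a ⬝ᵥ ((H * C) *ᵥ (Q⁻¹ *ᵥ ((H * C)ᴴ *ᵥ a))) := by
    conv_lhs => rw [← hb]
    rw [star_mulVec, conjTranspose_conjTranspose, ← dotProduct_mulVec, ← dotProduct_mulVec]
    simp only [mulVec_mulVec, conjTranspose_mul, Matrix.mul_assoc]
  rw [e]
  exact hk
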